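/- arXiv:2002.10704 — 2 statements merged into one kernel-verified Lean document; each statement's English description precedes it below -/
import Mathlib

section
/- (Strong faithfulness.) Fix a priority order σ and MRF valuations f_1,…,f_n on a finite item set M. Let A be a non-redundant σ-Lorenz dominating allocation for the profile (f_1,…,f_n), fix an agent v, and let S ⊆ A_v. Then every non-redundant σ-Lorenz dominating allocation for the profile in which f_v is replaced by the restricted valuation f_{v|S} (other valuations unchanged) gives agent v exactly the bundle S. -/
open Finset
open scoped Classical

variable {n : ℕ} {I : Type*} [DecidableEq I] [Fintype I]

/-- An allocation assigns pairwise disjoint bundles of items to the agents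
(items may remain unallocated). -/
def IsAllocation (A : Fin n → Finset I) : Prop :=
  ∀ i j : Fin n, i ≠ j → Disjoint (A i) (A j)

/-- The vector of utilities of an allocation under a profile of valuations. -/
def util {α : Type*} (f : Fin n → Finset I → α) (A : Fin n → Finset I) : Fin n → α :=
  fun i => f i (A i)

/-- The entries of the vector `u`, sorted in nondecreasing order. -/
noncomputable def sortedVec {α : Type*} [LinearOrder α] (u : Fin n → α) : List α :=
  (Finset.univ.val.map u).sort (· ≤ ·)

/-- `u` Lorenz-dominates `v`: for each `k`, the sum of the `k` smallest entries of `u`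
is at least the sum of the `k` smallest entries of `v`. -/
def LorenzGE {α : Type*} [LinearOrder α] [AddCommMonoid α] (u v : Fin n → α) : Prop :=
  ∀ k : ℕ, ((sortedVec v).take k).sum ≤ ((sortedVec u).take k).sum

/-- A matroid rank function: a normalized submodular valuation with dichotomous marginals. -/
structure IsMRF (f : Finset I → ℕ) : Prop where
  empty : f ∅ = 0
  submod : ∀ S T : Finset I, S ⊆ T → ∀ a : I,
      f (insert a T) + f S ≤ f (insert a S) + f T
  dichot : ∀ (S : Finset I) (a : I), f (insert a S) = f S ∨ f (insert a S) = f S + 1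

/-- Non-redundancy: removing any item from any agent's bundle strictly decreases its value. -/
def NonRedundant (f : Fin n → Finset I → ℕ) (A : Fin n → Finset I) : Prop :=
  ∀ i : Fin n, ∀ a ∈ A i, f i ((A i).erase a) < f i (A i)

/-- A Lorenz dominating allocation. -/
def LorenzDominating (f : Fin n → Finset I → ℕ) (A : Fin n → Finset I) : Prop :=
  ∀ B : Fin n → Finset I, IsAllocation B → LorenzGE (util f A) (util f B)

/-- The σ-perturbed utilities: agent `i` gets `f i (A i) + σ(i)/n²`, where the priority
`σ(i)` ranges over `{1,…,n}`. -/
noncomputable def pUtil (σ : Equiv.Perm (Fin n)) (f : Fin n → Finset I → ℕ)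
    (A : Fin n → Finset I) : Fin n → ℝ :=
  fun i => (f i (A i) : ℝ) + (((σ i : ℕ) : ℝ) + 1) / (n : ℝ) ^ 2

/-- A σ-Lorenz dominating allocation. -/
def SigmaLorenzDom (σ : Equiv.Perm (Fin n)) (f : Fin n → Finset I → ℕ)
    (A : Fin n → Finset I) : Prop :=
  ∀ B : Fin n → Finset I, IsAllocation B → LorenzGE (pUtil σ f A) (pUtil σ f B)

/-- Restriction of a valuation to a subset `D` of the items. -/
def restrictVal (f : Finset I → ℕ) (D : Finset I) : Finset I → ℕ := fun S => f (S ∩ D)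

/-- A partition of all the items into `n` (possibly empty) bundles. -/
def IsPartition (P : Fin n → Finset I) : Prop :=
  (∀ i j : Fin n, i ≠ j → Disjoint (P i) (P j)) ∧ ∀ a : I, ∃ j, a ∈ P j

/-- An XOS valuation: the pointwise maximum of a finite nonempty family of
nonnegative additive valuations. -/
def IsXOS (f : Finset I → ℝ) : Prop :=
  ∃ (k : ℕ) (w : Fin (k + 1) → I → ℝ),
    (∀ t a, 0 ≤ w t a) ∧
    ∀ S : Finset I, f S = Finset.univ.sup' Finset.univ_nonempty (fun t => ∑ a ∈ S, w t a)

/-- A dichotomous valuation (real-valued version). -/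
def IsDichotomousR (f : Finset I → ℝ) : Prop :=
  ∀ (S : Finset I) (a : I), f (insert a S) = f S ∨ f (insert a S) = f S + 1

/-- Envy-freeness up to one good. -/
def EF1 (f : Fin n → Finset I → ℝ) (A : Fin n → Finset I) : Prop :=
  ∀ i j : Fin n, f i (A j) ≤ f i (A i) ∨ ∃ e ∈ A j, f i ((A j).erase e) ≤ f i (A i)

/-- The maximum welfare attainable by a set `S` of agents. -/
noncomputable def maxWelfare (f : Fin n → Finset I → ℕ) (S : Finset (Fin n)) : ℕ :=
  Finset.sup (Finset.univ.filter fun B : Fin n → Finset I => IsAllocation B)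
    (fun B => ∑ j ∈ S, f j (B j))

/-- An allocation extended with index `none` for the set of unallocated items. -/
def extAlloc (A : Fin n → Finset I) : Option (Fin n) → Finset I
  | none => Finset.univ \ Finset.univ.biUnion A
  | some i => A i

/-! Non-redundant bundles are independent sets, so an allocation is described by the vector of its
bundle sizes, and augmenting paths show that these size vectors satisfy the exchange property of
the independent vectors of a polymatroid. Lorenz domination makes the chosen size vector
stable: no agent can gain for free, and a unit can move from `j` to `v` only if the perturbed
utility of `j` is below that of `v` plus one.

Let `x` be the size vector of `A` and `y` that of `A'`, and suppose `y v < #S`. Shrinking `x` at `v`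
to `#S` gives a vector `b` feasible for the restricted profile. Among the agents with `y i < b i`
take `w` with the least perturbed utility. Exchanging from `y` towards `b` at `w` yields `j` with
`x j = b j < y j`; exchanging from `x` towards `y` at `j` yields `k` with `y k < b k`. With
perturbed utilities `p` for `x` and `q` for `y`, stability gives
`q k + 1 ≤ p k < p j + 1 ≤ q j < q w + 1`, against the choice of `w`.
-/

omit [Fintype I]

/-! ### Matroid rank functions -/

/-- Independence of a set of items in the matroid whose rank function is `f`. -/
def Indep (f : Finset I → ℕ) (S : Finset I) : Prop :=
  f S = #S

namespace IsMRF

variable {f : Finset I → ℕ} {S T : Finset I}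

theorem le_insert (hf : IsMRF f) (S : Finset I) (a : I) : f S ≤ f (insert a S) := by
  rcases hf.dichot S a with h | h <;> omega

theorem insert_le (hf : IsMRF f) (S : Finset I) (a : I) : f (insert a S) ≤ f S + 1 := by
  rcases hf.dichot S a with h | h <;> omega

theorem le_union_right (hf : IsMRF f) (S T : Finset I) : f T ≤ f (S ∪ T) := by
  induction S using Finset.induction_on with
  | empty => rw [empty_union]
  | insert a S _ ih =>
    rw [insert_union]
    exact ih.trans (hf.le_insert _ a)

protected theorem mono (hf : IsMRF f) (hST : S ⊆ T) : f S ≤ f T := by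
  simpa only [union_eq_left.mpr hST] using hf.le_union_right T S

theorem union_le_card_add (hf : IsMRF f) (S T : Finset I) : f (S ∪ T) ≤ #S + f T := by
  induction S using Finset.induction_on with
  | empty => simp
  | insert a S ha ih =>
    rw [insert_union, card_insert_of_notMem ha]
    linarith [hf.insert_le (S ∪ T) a]

theorem le_card (hf : IsMRF f) (S : Finset I) : f S ≤ #S := by
  simpa only [union_empty, hf.empty, add_zero] using hf.union_le_card_add S ∅

theorem union_eq_right_of_forall_insert_eq (hf : IsMRF f) (h : ∀ a ∈ S, f (insert a T) = f T) :
    f (S ∪ T) = f T := by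
  induction S using Finset.induction_on with
  | empty => rw [empty_union]
  | insert a S _ ih =>
    have ih := ih fun b hb => h b (mem_insert_of_mem hb)
    have hsub := hf.submod T (S ∪ T) subset_union_right a
    have ha := h a (mem_insert_self a S)
    have hle := hf.le_insert (S ∪ T) a
    rw [insert_union]
    omega

theorem indep_subset (hf : IsMRF f) (hT : Indep f T) (hST : S ⊆ T) : Indep f S := by
  have hle := hf.union_le_card_add (T \ S) S
  rw [sdiff_union_of_subset hST, hT, ← card_sdiff_add_card_eq_card hST] at hle
  exact (hf.le_card S).antisymm (by omega)

theorem indep_insert (hf : IsMRF f) {a : I} (hS : Indep f S) (ha : f S < f (insert a S)) :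
    Indep f (insert a S) :=
  (hf.le_card _).antisymm <| (card_insert_le a S).trans (hS ▸ ha)

theorem exists_indep_insert (hf : IsMRF f) (hS : Indep f S) (hT : Indep f T) (h : #S < #T) :
    ∃ a ∈ T, a ∉ S ∧ Indep f (insert a S) := by
  obtain ⟨a, haT, ha⟩ : ∃ a ∈ T, f S < f (insert a S) := by
    by_contra! hspan
    have heq := hf.union_eq_right_of_forall_insert_eq fun a ha =>
      (hspan a ha).antisymm (hf.le_insert S a)
    have hle := hf.mono (subset_union_left (s₁ := T) (s₂ := S))
    rw [heq, hS, hT] at hle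
    exact hle.not_gt h
  refine ⟨a, haT, fun haS => ?_, hf.indep_insert hS ha⟩
  rw [insert_eq_of_mem haS] at ha
  exact ha.false

theorem indep_of_forall_erase_lt (hf : IsMRF f) (h : ∀ a ∈ S, f (S.erase a) < f S) :
    Indep f S := by
  suffices hT : ∀ T ⊆ S, Indep f T from hT S subset_rfl
  intro T
  induction T using Finset.induction_on with
  | empty => exact fun _ => hf.empty
  | insert a T ha ih =>
    intro hTS
    obtain ⟨haS, hTS⟩ := insert_subset_iff.mp hTS
    have hsub := hf.submod T (S.erase a) (subset_erase.mpr ⟨hTS, ha⟩) a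
    rw [insert_erase haS] at hsub
    have hlt := h a haS
    exact hf.indep_insert (ih hTS) (by omega)

theorem restrictVal (hf : IsMRF f) (D : Finset I) : IsMRF (restrictVal f D) where
  empty := by simp only [_root_.restrictVal, empty_inter, hf.empty]
  submod S T hST a := by
    by_cases ha : a ∈ D
    · simpa only [_root_.restrictVal, insert_inter_of_mem ha] using
        hf.submod (S ∩ D) (T ∩ D) (inter_subset_inter_right hST) a
    · simp only [_root_.restrictVal, insert_inter_of_notMem ha, add_comm, le_refl]
  dichot S a := by
    by_cases ha : a ∈ D
    · simpa only [_root_.restrictVal, insert_inter_of_mem ha] using hf.dichot (S ∩ D) a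
    · exact Or.inl (by simp only [_root_.restrictVal, insert_inter_of_notMem ha])

theorem indep_restrictVal_iff (hf : IsMRF f) {D : Finset I} :
    Indep (_root_.restrictVal f D) S ↔ Indep f S ∧ S ⊆ D := by
  constructor
  · intro h
    have hD : S ∩ D = S :=
      eq_of_subset_of_card_le inter_subset_left (h.symm.trans_le (hf.le_card (S ∩ D)))
    rw [Indep, _root_.restrictVal, hD] at h
    exact ⟨h, inter_eq_left.mp hD⟩
  · rintro ⟨h, hD⟩
    rwa [Indep, _root_.restrictVal, inter_eq_left.mpr hD]

end IsMRF

/-! ### Clean allocations -/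

/-- An allocation is clean for a profile of valuations if every bundle is worth its cardinality,
i.e. is independent for its owner. For matroid rank functions this is non-redundancy. -/
structure IsClean (f : Fin n → Finset I → ℕ) (A : Fin n → Finset I) : Prop where
  isAllocation : IsAllocation A
  indep : ∀ i, Indep (f i) (A i)

/-- The numbers of items that the agents receive. -/
def bundleSizes (A : Fin n → Finset I) : Fin n → ℕ :=
  fun i => #(A i)

/-- The vectors of bundle sizes attained by clean allocations. -/
def cleanSizes (f : Fin n → Finset I → ℕ) : Set (Fin n → ℕ) :=
  bundleSizes '' {A | IsClean f A}

section Clean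

variable {f : Fin n → Finset I → ℕ} {A B : Fin n → Finset I}

theorem NonRedundant.isClean (h : NonRedundant f A) (hf : ∀ i, IsMRF (f i))
    (hA : IsAllocation A) : IsClean f A :=
  ⟨hA, fun i => (hf i).indep_of_forall_erase_lt (h i)⟩

theorem IsClean.subset (hA : IsClean f A) (hf : ∀ i, IsMRF (f i)) (hBA : ∀ i, B i ⊆ A i) :
    IsClean f B :=
  ⟨fun i j hij => (hA.isAllocation i j hij).mono (hBA i) (hBA j),
    fun i => (hf i).indep_subset (hA.indep i) (hBA i)⟩

theorem isClean_update_restrictVal_iff {v : Fin n} (hf : IsMRF (f v)) {D : Finset I} :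
    IsClean (Function.update f v (restrictVal (f v) D)) A ↔ IsClean f A ∧ A v ⊆ D := by
  have hindep : (∀ i, Indep (Function.update f v (restrictVal (f v) D) i) (A i)) ↔
      (∀ i, Indep (f i) (A i)) ∧ A v ⊆ D := by
    rw [Function.forall_update_iff f fun i g => Indep g (A i), hf.indep_restrictVal_iff,
      and_right_comm, ← Function.forall_update_iff f fun i g => Indep g (A i),
      Function.update_eq_self]
  constructor
  · rintro ⟨hA, h⟩
    exact ⟨⟨hA, (hindep.mp h).1⟩, (hindep.mp h).2⟩
  · rintro ⟨⟨hA, h⟩, hD⟩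
    exact ⟨hA, hindep.mpr ⟨h, hD⟩⟩

end Clean

/-! ### Exchange of units between agents -/

section Exchange

variable {ι : Type*} [DecidableEq ι]

/-- The exchange property of the independent vectors of an integral polymatroid: if `y v < x v`,
then `v` gains a unit starting from `y`, either for free or at the expense of an agent `j` with
`x j < y j`. The truncated subtraction is harmless, as then `0 < y j` and `j ≠ v`. -/
def HasExchange (P : Set (ι → ℕ)) : Prop :=
  ∀ x ∈ P, ∀ y ∈ P, ∀ v, y v < x v →
    y + Pi.single v 1 ∈ P ∨ ∃ j, x j < y j ∧ y + Pi.single v 1 - Pi.single j 1 ∈ P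

/-- `x` is a local optimum of `P` for the utilities `x i + ε i`: no agent can gain a unit for
free, and a unit can be moved from `j` to `v` only if `j` starts below the level that `v` reaches.
By the former condition a vector with `x j = 0`, where the subtraction truncates, never satisfies
the premise of the latter. -/
structure IsExchangeStable (P : Set (ι → ℕ)) (ε : ι → ℝ) (x : ι → ℕ) : Prop where
  mem : x ∈ P
  add_single_notMem : ∀ v, x + Pi.single v 1 ∉ P
  lt_add_one : ∀ {j v}, j ≠ v → x + Pi.single v 1 - Pi.single j 1 ∈ P →
    x j + ε j < x v + ε v + 1

theorem IsExchangeStable.exists_transfer {P : Set (ι → ℕ)} (hP : HasExchange P) {ε : ι → ℝ}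
    {x y : ι → ℕ} (hy : IsExchangeStable P ε y) (hx : x ∈ P) {v : ι} (hv : y v < x v) :
    ∃ j, x j < y j ∧ y j + ε j < y v + ε v + 1 := by
  obtain hgain | ⟨j, hj, htransfer⟩ := hP x hx y hy.mem v hv
  · exact absurd hgain (hy.add_single_notMem v)
  · have hjv : j ≠ v := fun h => (h ▸ hj).not_gt hv
    exact ⟨j, hj, hy.lt_add_one hjv htransfer⟩

theorem IsExchangeStable.le_of_update_mem [Finite ι] {P Q : Set (ι → ℕ)} (hP : HasExchange P)
    (hQ : HasExchange Q) {ε : ι → ℝ} {x y : ι → ℕ} (hx : IsExchangeStable P ε x)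
    (hy : IsExchangeStable Q ε y) (hyP : y ∈ P) {v : ι} {s : ℕ} (hs : s ≤ x v)
    (hsQ : Function.update x v s ∈ Q) : s ≤ y v := by
  by_contra! hv
  set b := Function.update x v s
  have hbv : b v = s := Function.update_self ..
  have hbx : ∀ i ≠ v, b i = x i := fun i hi => Function.update_of_ne hi ..
  obtain ⟨w, hw, hmin⟩ := Set.exists_min_image {i | y i < b i} (fun i => (y i : ℝ) + ε i)
    (Set.toFinite _) ⟨v, hv.trans_eq hbv.symm⟩
  obtain ⟨j, hbj, hjw⟩ := hy.exists_transfer hQ hsQ hw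
  have hjv : j ≠ v := by rintro rfl; omega
  have hxj : x j < y j := hbx j hjv ▸ hbj
  obtain ⟨k, hyk, hkj⟩ := hx.exists_transfer hP hyP hxj
  have hkb : y k < b k := by
    by_cases hkv : k = v
    · rwa [hkv, hbv]
    · rwa [hbx k hkv]
  refine (hmin k hkb).not_gt ?_
  have hyk' : (y k : ℝ) + 1 ≤ x k := mod_cast hyk
  have hxj' : (x j : ℝ) + 1 ≤ y j := mod_cast hxj
  linarith

end Exchange

/-! ### The exchange property of clean allocations -/

/-- The allocation obtained from `A` by handing the item `a` to agent `v`, and removing it from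
the bundle of its previous owner, if any. -/
def giveItem (A : Fin n → Finset I) (a : I) (v : Fin n) : Fin n → Finset I :=
  fun i => if i = v then insert a (A i) else (A i).erase a

section GiveItem

variable {f : Fin n → Finset I → ℕ} {A B : Fin n → Finset I} {a : I} {v : Fin n}

theorem giveItem_self : giveItem A a v v = insert a (A v) :=
  if_pos rfl

theorem giveItem_of_ne {i : Fin n} (hi : i ≠ v) : giveItem A a v i = (A i).erase a :=
  if_neg hi

theorem mem_giveItem {i : Fin n} {b : I} :
    b ∈ giveItem A a v i ↔ if b = a then i = v else b ∈ A i := by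
  by_cases hi : i = v
  · subst hi; rw [giveItem_self, mem_insert]; split_ifs with h <;> simp [h]
  · rw [giveItem_of_ne hi, mem_erase]; split_ifs with h <;> simp [h, hi]

theorem IsClean.giveItem (hA : IsClean f A) (hf : ∀ i, IsMRF (f i))
    (hv : Indep (f v) (insert a (A v))) : IsClean f (giveItem A a v) where
  isAllocation i j hij := by
    rw [disjoint_left]
    intro b hbi hbj
    rw [mem_giveItem] at hbi hbj
    split_ifs at hbi hbj with hb
    · exact hij (hbi.trans hbj.symm)
    · exact disjoint_left.mp (hA.isAllocation i j hij) hbi hbj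
  indep i := by
    by_cases hi : i = v
    · subst hi; rwa [giveItem_self]
    · rw [giveItem_of_ne hi]
      exact (hf i).indep_subset (hA.indep i) (erase_subset a (A i))

theorem bundleSizes_giveItem_of_forall_notMem (ha : ∀ i, a ∉ A i) :
    bundleSizes (giveItem A a v) = bundleSizes A + Pi.single v 1 := by
  ext i
  by_cases hi : i = v
  · subst hi; simp [bundleSizes, giveItem_self, ha i]
  · simp [bundleSizes, giveItem_of_ne hi, ha i, hi]

theorem bundleSizes_giveItem_add_single (hA : IsAllocation A) {j : Fin n} (hj : a ∈ A j)
    (hjv : j ≠ v) :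
    bundleSizes (giveItem A a v) + Pi.single j 1 = bundleSizes A + Pi.single v 1 := by
  have ha : ∀ i ≠ j, a ∉ A i := fun i hij hi => disjoint_left.mp (hA i j hij) hi hj
  ext i
  by_cases hi : i = v
  · subst hi; simp [bundleSizes, giveItem_self, ha i hjv.symm, hjv.symm]
  · by_cases hij : i = j
    · subst hij; simp [bundleSizes, giveItem_of_ne hi, card_erase_add_one hj, hi]
    · simp [bundleSizes, giveItem_of_ne hi, ha i hij, hi, hij]

theorem sum_card_sdiff_giveItem_lt (hB : IsAllocation B) (haB : a ∈ B v) (haA : a ∉ A v) :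
    ∑ i, #(B i \ giveItem A a v i) < ∑ i, #(B i \ A i) := by
  have hsub : ∀ i, B i \ giveItem A a v i ⊆ B i \ A i := by
    intro i b hb
    rw [mem_sdiff, mem_giveItem] at hb
    refine mem_sdiff.mpr ⟨hb.1, fun hbA => hb.2 ?_⟩
    split_ifs with hba
    · by_contra hi
      exact disjoint_left.mp (hB i v hi) (hba ▸ hb.1) haB
    · exact hbA
  refine sum_lt_sum (fun i _ => card_le_card (hsub i)) ⟨v, mem_univ v, card_lt_card ?_⟩
  exact (ssubset_iff_of_subset (hsub v)).mpr
    ⟨a, mem_sdiff.mpr ⟨haB, haA⟩, by simp [giveItem_self]⟩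

end GiveItem

theorem hasExchange_cleanSizes {f : Fin n → Finset I → ℕ} (hf : ∀ i, IsMRF (f i)) :
    HasExchange (cleanSizes f) := by
  rintro _ ⟨A, hA, rfl⟩ _ ⟨B, hB, rfl⟩ v hv
  -- Handing an item of `A v` to `v` brings `B` closer to `A`; if its previous owner `j` now falls
  -- short of `A j`, the augmenting path continues from `j`.
  induction hm : ∑ i, #(A i \ B i) using Nat.strong_induction_on generalizing B v with
  | _ m ih =>
  obtain ⟨a, haA, haB, hins⟩ := (hf v).exists_indep_insert (hB.indep v) (hA.indep v) hv
  have hC : IsClean f (giveItem B a v) := hB.giveItem hf hins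
  by_cases hfree : ∀ i, a ∉ B i
  · exact Or.inl ⟨_, hC, bundleSizes_giveItem_of_forall_notMem hfree⟩
  push Not at hfree
  obtain ⟨j, haj⟩ := hfree
  have hjv : j ≠ v := fun h => haB (h ▸ haj)
  have hsizes := bundleSizes_giveItem_add_single hB.isAllocation haj hjv
  by_cases hj : bundleSizes A j < bundleSizes B j
  · exact Or.inr ⟨j, hj, _, hC, eq_tsub_of_add_eq hsizes⟩
  have hCj : bundleSizes (giveItem B a v) j < bundleSizes A j := by
    have hsizes_j := congrFun hsizes j
    rw [Pi.add_apply, Pi.add_apply, Pi.single_eq_same, Pi.single_eq_of_ne hjv] at hsizes_j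
    omega
  have hcloser := hm ▸ sum_card_sdiff_giveItem_lt hA.isAllocation haA haB
  obtain hgain | ⟨k, hk, htransfer⟩ := ih _ hcloser _ hC j hCj rfl
  · exact Or.inl (hsizes ▸ hgain)
  · refine Or.inr ⟨k, ?_, hsizes ▸ htransfer⟩
    have hsizes_k := congrFun hsizes k
    rw [Pi.add_apply, Pi.add_apply] at hsizes_k
    by_cases hkv : k = v
    · subst hkv
      rw [Pi.single_eq_same] at hsizes_k
      omega
    · rw [Pi.single_eq_of_ne hkv] at hsizes_k
      omega

/-! ### Lorenz domination -/

section Lorenz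

theorem sum_map_const_sub {α : Type*} [AddCommGroup α] (c : α) (l : List α) :
    (l.map (c - ·)).sum = l.length • c - l.sum := by
  induction l with
  | nil => simp
  | cons x l ih =>
    simp only [List.map_cons, List.sum_cons, List.length_cons, ih, succ_nsmul]
    abel

theorem length_sortedVec {α : Type*} [LinearOrder α] (u : Fin n → α) :
    (sortedVec u).length = n := by
  simp [sortedVec]

theorem sum_map_sortedVec {α β : Type*} [LinearOrder α] [AddCommMonoid β] (u : Fin n → α)
    (g : α → β) : ((sortedVec u).map g).sum = ∑ i, g (u i) := by
  rw [← Multiset.sum_coe, ← Multiset.map_coe, sortedVec, Multiset.sort_eq, Multiset.map_map]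
  rfl

variable {α : Type*} [AddCommGroup α] [LinearOrder α] [IsOrderedAddMonoid α]

theorem sum_map_sub_take_le_sum_posPart (c : α) (l : List α) (k : ℕ) :
    ((l.take k).map (c - ·)).sum ≤ (l.map fun x => (c - x)⁺).sum := by
  calc ((l.take k).map (c - ·)).sum
    _ ≤ ((l.take k).map fun x => (c - x)⁺).sum :=
        List.sum_le_sum fun x _ => le_posPart (c - x)
    _ ≤ (l.map fun x => (c - x)⁺).sum :=
        ((List.take_sublist k l).map _).sum_le_sum (by simp [posPart_nonneg])

theorem exists_sum_map_sub_take_eq_sum_posPart (c : α) {l : List α} (hl : l.Pairwise (· ≤ ·)) :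
    ∃ k, ((l.take k).map (c - ·)).sum = (l.map fun x => (c - x)⁺).sum := by
  induction l with
  | nil => exact ⟨0, rfl⟩
  | cons x l ih =>
    obtain ⟨hxl, hl⟩ := List.pairwise_cons.mp hl
    by_cases hx : x ≤ c
    · obtain ⟨k, hk⟩ := ih hl
      refine ⟨k + 1, ?_⟩
      rw [List.take_succ_cons, List.map_cons, List.map_cons, List.sum_cons, List.sum_cons, hk,
        posPart_of_nonneg (sub_nonneg.mpr hx)]
    · refine ⟨0, (List.sum_eq_zero ?_).symm⟩
      have hge : ∀ y ∈ x :: l, c ≤ y :=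
        List.forall_mem_cons.mpr ⟨(not_le.mp hx).le, fun y hy => (not_le.mp hx).le.trans (hxl y hy)⟩
      exact List.forall_mem_map.mpr fun y hy => posPart_eq_zero.mpr (sub_nonpos.mpr (hge y hy))

theorem LorenzGE.sum_posPart_le {u w : Fin n → α} (h : LorenzGE u w) (c : α) :
    ∑ i, (c - u i)⁺ ≤ ∑ i, (c - w i)⁺ := by
  obtain ⟨k, hk⟩ := exists_sum_map_sub_take_eq_sum_posPart c
    (Multiset.pairwise_sort (univ.val.map u) (· ≤ ·))
  calc ∑ i, (c - u i)⁺
    _ = (((sortedVec u).take k).map (c - ·)).sum :=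
        (sum_map_sortedVec u fun x => (c - x)⁺).symm.trans hk.symm
    _ ≤ (((sortedVec w).take k).map (c - ·)).sum := by
        simp only [sum_map_const_sub, List.length_take, length_sortedVec]
        exact sub_le_sub_left (h k) _
    _ ≤ ∑ i, (c - w i)⁺ :=
        (sum_map_sub_take_le_sum_posPart c _ k).trans_eq
          (sum_map_sortedVec w fun x => (c - x)⁺)

theorem LorenzGE.le_of_forall_ne_le {u w : Fin n → α} (h : LorenzGE u w) {j v : Fin n}
    (hle : ∀ i ≠ j, u i ≤ w i) (hv : u v < w v) : w j ≤ u v := by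
  by_contra! hj
  refine (h.sum_posPart_le (w j)).not_gt (sum_lt_sum (fun i _ => ?_) ⟨v, mem_univ v, ?_⟩)
  · by_cases hij : i = j
    · rw [hij, sub_self, posPart_zero]
      exact posPart_nonneg _
    · exact posPart_mono (sub_le_sub_left (hle i hij) _)
  · rw [posPart_of_nonneg (sub_nonneg.mpr hj.le)]
    exact max_lt (sub_lt_sub_left hv _) (sub_pos.mpr hj)

end Lorenz

/-! ### Stability of the prioritized egalitarian allocation -/

/-- The perturbation `σ(i)/n²` added to the utility of agent `i`, with `σ(i)` ranging over
`{1,…,n}`. -/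
noncomputable def priorityBonus (σ : Equiv.Perm (Fin n)) : Fin n → ℝ :=
  fun i => (((σ i : ℕ) : ℝ) + 1) / (n : ℝ) ^ 2

theorem priorityBonus_mem_Ioc (σ : Equiv.Perm (Fin n)) (i : Fin n) :
    priorityBonus σ i ∈ Set.Ioc 0 1 := by
  have hn : 0 < (n : ℝ) := Nat.cast_pos.mpr i.pos
  have hn' : (1 : ℝ) ≤ n := mod_cast i.pos
  have hσ : ((σ i : ℕ) : ℝ) + 1 ≤ n := mod_cast (σ i).isLt
  refine ⟨by unfold priorityBonus; positivity, ?_⟩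
  rw [priorityBonus, div_le_one (by positivity)]
  nlinarith

theorem priorityBonus_injective (σ : Equiv.Perm (Fin n)) :
    Function.Injective (priorityBonus σ) := by
  intro i j h
  have hn : (n : ℝ) ^ 2 ≠ 0 := pow_ne_zero 2 (Nat.cast_ne_zero.mpr i.pos.ne')
  simp only [priorityBonus] at h
  rw [div_left_inj' hn, add_left_inj, Nat.cast_inj] at h
  exact σ.injective (Fin.ext h)

theorem natCast_add_priorityBonus_ne (σ : Equiv.Perm (Fin n)) {i j : Fin n} (hij : i ≠ j)
    (a b : ℕ) : a + priorityBonus σ i ≠ b + priorityBonus σ j := by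
  intro h
  obtain ⟨hi0, hi1⟩ := priorityBonus_mem_Ioc σ i
  obtain ⟨hj0, hj1⟩ := priorityBonus_mem_Ioc σ j
  have hab : (a : ℝ) < b + 1 := by linarith
  have hba : (b : ℝ) < a + 1 := by linarith
  norm_cast at hab hba
  obtain rfl : a = b := by omega
  exact hij (priorityBonus_injective σ (add_left_cancel h))

omit [DecidableEq I] in
theorem IsClean.pUtil_eq {σ : Equiv.Perm (Fin n)} {f : Fin n → Finset I → ℕ}
    {A : Fin n → Finset I} (hA : IsClean f A) :
    pUtil σ f A = fun i => (bundleSizes A i : ℝ) + priorityBonus σ i := by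
  ext i
  rw [pUtil, hA.indep i]
  rfl

omit [DecidableEq I] in
theorem SigmaLorenzDom.isExchangeStable {σ : Equiv.Perm (Fin n)} {f : Fin n → Finset I → ℕ}
    {A : Fin n → Finset I} (h : SigmaLorenzDom σ f A) (hA : IsClean f A) :
    IsExchangeStable (cleanSizes f) (priorityBonus σ) (bundleSizes A) := by
  set x := bundleSizes A
  have hdom : ∀ z ∈ cleanSizes f, LorenzGE (fun i => (x i : ℝ) + priorityBonus σ i)
      (fun i => (z i : ℝ) + priorityBonus σ i) := by
    rintro _ ⟨B, hB, rfl⟩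
    simpa only [hA.pUtil_eq, hB.pUtil_eq] using h B hB.isAllocation
  refine ⟨⟨A, hA, rfl⟩, fun v hz => ?_, fun {j v} hjv hz => ?_⟩
  · have hle := (hdom _ hz).le_of_forall_ne_le (j := v) (v := v) (fun i _ => by simp) (by simp)
    simp only [Pi.add_apply, Pi.single_eq_same] at hle
    push_cast at hle
    linarith
  · have hle := (hdom _ hz).le_of_forall_ne_le (j := j) (v := v)
      (fun i hij => by simp [hij]) (by simp [hjv.symm])
    have hj : (x j : ℝ) ≤ (x j - 1 : ℕ) + 1 := mod_cast le_tsub_add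
    simp only [Pi.sub_apply, Pi.add_apply, Pi.single_eq_of_ne hjv, Pi.single_eq_same,
      add_zero] at hle
    have hne := natCast_add_priorityBonus_ne σ hjv (x j) (x v + 1)
    push_cast at hne
    exact lt_of_le_of_ne (by linarith) fun heq => hne (by linarith)

theorem PE_strongly_faithful_general (σ : Equiv.Perm (Fin n)) {f : Fin n → Finset I → ℕ}
    (hf : ∀ i, IsMRF (f i)) {A : Fin n → Finset I} (hA : IsAllocation A)
    (hNR : NonRedundant f A) (hLD : SigmaLorenzDom σ f A) (v : Fin n) {S : Finset I}
    (hS : S ⊆ A v) {A' : Fin n → Finset I} (hA' : IsAllocation A')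
    (hNR' : NonRedundant (Function.update f v (restrictVal (f v) S)) A')
    (hLD' : SigmaLorenzDom σ (Function.update f v (restrictVal (f v) S)) A') :
    A' v = S := by
  have hg : ∀ i, IsMRF (Function.update f v (restrictVal (f v) S) i) :=
    (Function.forall_update_iff f fun _ => IsMRF).mpr ⟨(hf v).restrictVal S, fun i _ => hf i⟩
  have hclean : IsClean f A := hNR.isClean hf hA
  have hclean' := hNR'.isClean hg hA'
  obtain ⟨hcleanA', hsub⟩ := (isClean_update_restrictVal_iff (hf v)).mp hclean'
  have hshrunk : Function.update (bundleSizes A) v #S ∈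
      cleanSizes (Function.update f v (restrictVal (f v) S)) := by
    refine ⟨Function.update A v S, (isClean_update_restrictVal_iff (hf v)).mpr
      ⟨hclean.subset hf (update_le_self_iff.mpr hS), ?_⟩, ?_⟩
    · rw [Function.update_self]
    · exact funext (Function.apply_update (fun _ => card) A v S)
  exact eq_of_subset_of_card_le hsub <|
    (hLD.isExchangeStable hclean).le_of_update_mem (hasExchange_cleanSizes hf)
      (hasExchange_cleanSizes hg) (hLD'.isExchangeStable hclean') ⟨A', hcleanA', rfl⟩
      (card_le_card hS) hshrunk

/-- Strong faithfulness of the prioritized egalitarian mechanism: if agent `v` restricts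
her report to a subset `S` of the bundle `A v` she receives, then in every non-redundant
σ-Lorenz dominating allocation for the new profile she receives exactly `S`. -/
theorem PE_strongly_faithful
    {n : ℕ} {I : Type*} [DecidableEq I] [Fintype I]
    (σ : Equiv.Perm (Fin n))
    (f : Fin n → Finset I → ℕ) (hf : ∀ i, IsMRF (f i))
    (A : Fin n → Finset I) (hA : IsAllocation A)
    (hNR : NonRedundant f A) (hLD : SigmaLorenzDom σ f A)
    (v : Fin n) (S : Finset I) (hS : S ⊆ A v)
    (A' : Fin n → Finset I) (hA' : IsAllocation A')
    (hNR' : NonRedundant (Function.update f v (restrictVal (f v) S)) A')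
    (hLD' : SigmaLorenzDom σ (Function.update f v (restrictVal (f v) S)) A') :
    A' v = S :=
  PE_strongly_faithful_general σ hf hA hNR hLD v hS hA' hNR' hLD'
end

section
/- For every n ≥ 2 and every integer k ≥ 1 there exist dichotomous XOS valuations f_1,…,f_n for n agents on a finite item set M with |M| = n(k+1) + (n−1)k such that the maximum welfare over all allocations equals 2nk + n − k, while every EF1 allocation has welfare at most n(k+1). (Concretely, take pairwise disjoint sets S_1,…,S_n with |S_1| = n(k+1) and |S_j| = k for 2 ≤ j ≤ n, and let f_1(S) = |S ∩ S_1| and f_j(S) = max(|S ∩ S_1|, |S ∩ S_j|) for j ≥ 2.) -/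
open Finset
open scoped Classical

variable {n : ℕ} {I : Type*} [DecidableEq I] [Fintype I]

/-!
All agents value one large common set `T`, and all but one of them alternatively value a private
set of `k` items. The optimum gives `T` to the agent without a private set and every other agent
its private set. In an EF1 allocation, however, suppose that some agent has value above `k + 1`.
Then it holds more than `k + 1` common items, and since removing an item lowers a dichotomous
valuation by at most one, every agent has value above `k`, which a private set cannot provide.
Hence all agents draw their value from `T`, and the welfare is at most `#T`.
-/

section Allocation

variable {M : Type*} {A : Fin n → Finset M}

lemma IsAllocation.sum_card_inter_le [DecidableEq M] (hA : IsAllocation A)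
    (T : Finset M) : ∑ i, #(A i ∩ T) ≤ #T := by
  rw [← card_biUnion fun i _ j _ hij => (hA i j hij).mono inter_subset_left inter_subset_left]
  exact card_le_card (biUnion_subset.2 fun _ _ => inter_subset_right)

lemma IsAllocation.sum_card_le [Fintype M] (hA : IsAllocation A) :
    ∑ i, #(A i) ≤ Fintype.card M := by
  simpa only [inter_univ, card_univ] using hA.sum_card_inter_le univ

lemma exists_isAllocation_card_eq [Fintype M] (s : Fin n → ℕ) (hs : ∑ i, s i ≤ Fintype.card M) :
    ∃ P : Fin n → Finset M, IsAllocation P ∧ ∀ i, #(P i) = s i := by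
  obtain ⟨e⟩ : Nonempty ((Σ i, Fin (s i)) ↪ M) :=
    Function.Embedding.nonempty_of_card_le (by simpa using hs)
  refine ⟨fun i => univ.map ((Function.Embedding.sigmaMk i).trans e), fun i j hij => ?_,
    fun i => by simp⟩
  simp only [← map_map, disjoint_map]
  simp [disjoint_left, hij.symm]

lemma EF1.le_add_one [DecidableEq M] {f : Fin n → Finset M → ℝ} (hA : EF1 f A) {i : Fin n}
    (hf : IsDichotomousR (f i)) (j : Fin n) : f i (A j) ≤ f i (A i) + 1 := by
  rcases hA i j with hle | ⟨e, he, hle⟩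
  · linarith
  · have hmarginal := hf ((A j).erase e) e
    rw [insert_erase he] at hmarginal
    rcases hmarginal with h | h <;> linarith

end Allocation

lemma card_insert_inter_le {M : Type*} [DecidableEq M] (S T : Finset M) (a : M) :
    #(insert a S ∩ T) ≤ #(S ∩ T) + 1 :=
  (card_le_card (by grind)).trans (card_insert_le a (S ∩ T))

/-- The valuation of an agent who may use either the items of `T` or those of `U`, but not both:
`S ↦ max(|S ∩ T|, |S ∩ U|)`. The valuations `f_j` of the construction are those with `T = S_1` and
`U = S_j`; in particular `f_1` has `T = U`. -/
def maxInterCard {M : Type*} [DecidableEq M] (T U S : Finset M) : ℕ :=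
  max #(S ∩ T) #(S ∩ U)

section maxInterCard

variable {M : Type*} [DecidableEq M] (T U S : Finset M)

lemma card_inter_le_maxInterCard : #(S ∩ T) ≤ maxInterCard T U S :=
  le_max_left _ _

lemma maxInterCard_le_card : maxInterCard T U S ≤ #S :=
  max_le (card_le_card inter_subset_left) (card_le_card inter_subset_left)

lemma maxInterCard_self_right : maxInterCard T U U = #U := by
  rw [maxInterCard, inter_self, max_eq_right (card_le_card inter_subset_left)]

lemma maxInterCard_mono : Monotone (maxInterCard T U) := fun _ _ h =>
  max_le_max (card_le_card (inter_subset_inter_right h)) (card_le_card (inter_subset_inter_right h))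

lemma maxInterCard_insert_le (a : M) :
    maxInterCard T U (insert a S) ≤ maxInterCard T U S + 1 := by
  rw [maxInterCard, maxInterCard, ← max_add_add_right]
  exact max_le_max (card_insert_inter_le S T a) (card_insert_inter_le S U a)

lemma isDichotomousR_maxInterCard : IsDichotomousR fun S => (maxInterCard T U S : ℝ) := by
  intro S a
  have hmono := maxInterCard_mono T U (subset_insert a S)
  have hinsert := maxInterCard_insert_le T U S a
  beta_reduce
  norm_cast
  omega

lemma isXOS_maxInterCard : IsXOS fun S => (maxInterCard T U S : ℝ) := by
  refine ⟨1, fun t a => if a ∈ ![T, U] t then 1 else 0, fun t a => by positivity, fun S => ?_⟩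
  have huniv : (univ : Finset (Fin (1 + 1))) = {0, 1} := rfl
  simp [maxInterCard, huniv]

variable {T U S} in
lemma maxInterCard_eq_card_inter {k : ℕ} (hU : U ⊆ T ∨ #U ≤ k) (hS : k < maxInterCard T U S) :
    maxInterCard T U S = #(S ∩ T) := by
  refine max_eq_left ?_
  rcases hU with hUT | hUk
  · exact card_le_card (inter_subset_inter_left hUT)
  · have hSU : #(S ∩ U) ≤ k := (card_le_card inter_subset_right).trans hUk
    exact hSU.trans ((lt_max_iff.1 hS).resolve_right hSU.not_gt).le

end maxInterCard

section Profile

variable {M : Type*} [DecidableEq M] {A : Fin n → Finset M} {T : Finset M} {U : Fin n → Finset M}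

lemma card_inter_le_maxInterCard_add_one_of_EF1
    (hEF : EF1 (fun i S => (maxInterCard T (U i) S : ℝ)) A) (i j : Fin n) :
    #(A j ∩ T) ≤ maxInterCard T (U i) (A i) + 1 := by
  refine (card_inter_le_maxInterCard T (U i) (A j)).trans ?_
  exact_mod_cast hEF.le_add_one (isDichotomousR_maxInterCard T (U i)) j

lemma sum_maxInterCard_le_card [Fintype M] (hA : IsAllocation A) :
    ∑ i, maxInterCard T (U i) (A i) ≤ Fintype.card M :=
  (sum_le_sum fun i _ => maxInterCard_le_card T (U i) (A i)).trans hA.sum_card_le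

lemma sum_maxInterCard_le_of_EF1 {k : ℕ} (hU : ∀ i, U i ⊆ T ∨ #(U i) ≤ k) (hA : IsAllocation A)
    (hEF : EF1 (fun i S => (maxInterCard T (U i) S : ℝ)) A) :
    ∑ i, maxInterCard T (U i) (A i) ≤ max (n * (k + 1)) #T := by
  by_cases hsmall : ∀ j, maxInterCard T (U j) (A j) ≤ k + 1
  · refine le_max_of_le_left ?_
    simpa using sum_le_card_nsmul univ _ (k + 1) fun j _ => hsmall j
  · push Not at hsmall
    obtain ⟨j, hj⟩ := hsmall
    have hcommon : k + 1 < #(A j ∩ T) := by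
      rwa [maxInterCard_eq_card_inter (hU j) (by omega)] at hj
    have hlarge (i : Fin n) : k < maxInterCard T (U i) (A i) := by
      have := card_inter_le_maxInterCard_add_one_of_EF1 hEF i j
      omega
    refine le_max_of_le_right ?_
    calc ∑ i, maxInterCard T (U i) (A i) = ∑ i, #(A i ∩ T) :=
          sum_congr rfl fun i _ => maxInterCard_eq_card_inter (hU i) (hlarge i)
      _ ≤ #T := hA.sum_card_inter_le T

end Profile

/-- For every `n ≥ 2` and `k ≥ 1` there are dichotomous XOS valuations on
`n(k+1) + (n−1)k` items such that the maximum welfare equals `2nk + n − k`, while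
every EF1 allocation has welfare at most `n(k+1)`. -/
theorem welfare_gap_EF1_dichotomous_XOS (n k : ℕ) (hn : 2 ≤ n) (hk : 1 ≤ k) :
    ∃ f : Fin n → Finset (Fin (n * (k + 1) + (n - 1) * k)) → ℝ,
      (∀ i, IsXOS (f i) ∧ IsDichotomousR (f i)) ∧
      -- the maximum welfare equals 2nk + n − k
      (∃ A : Fin n → Finset (Fin (n * (k + 1) + (n - 1) * k)), IsAllocation A ∧
        ∑ i, f i (A i) = 2 * n * k + n - k) ∧
      (∀ A : Fin n → Finset (Fin (n * (k + 1) + (n - 1) * k)), IsAllocation A →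
        ∑ i, f i (A i) ≤ 2 * n * k + n - k) ∧
      -- every EF1 allocation has welfare at most n(k+1)
      (∀ A : Fin n → Finset (Fin (n * (k + 1) + (n - 1) * k)), IsAllocation A →
        EF1 f A → ∑ i, f i (A i) ≤ n * (k + 1)) := by
  have hpos : 0 < n := by omega
  let z : Fin n := ⟨0, hpos⟩
  let s : Fin n → ℕ := Function.update (fun _ => k) z (n * (k + 1))
  have hs : ∑ i, s i = n * (k + 1) + (n - 1) * k := by
    simp [s, sum_update_of_mem, card_sdiff]
  have hitems : 2 * n * k + n - k = ((n * (k + 1) + (n - 1) * k : ℕ) : ℝ) := by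
    push_cast [Nat.cast_sub hpos]
    ring
  obtain ⟨P, hP, hcard⟩ := exists_isAllocation_card_eq
    (M := Fin (n * (k + 1) + (n - 1) * k)) s (by rw [hs, Fintype.card_fin])
  have hcommon : #(P z) = n * (k + 1) := by simp [hcard, s]
  have hprivate (i : Fin n) : P i ⊆ P z ∨ #(P i) ≤ k := by
    by_cases hi : i = z <;> simp [hcard, s, hi]
  refine ⟨fun i S => (maxInterCard (P z) (P i) S : ℝ),
    fun i => ⟨isXOS_maxInterCard _ _, isDichotomousR_maxInterCard _ _⟩,
    ⟨P, hP, ?_⟩, fun A hA => ?_, fun A hA hEF => ?_⟩ <;> beta_reduce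
  · simp only [maxInterCard_self_right, hcard, hitems, ← hs, Nat.cast_sum]
  · rw [hitems]
    exact_mod_cast (sum_maxInterCard_le_card hA).trans_eq (Fintype.card_fin _)
  · have hwelfare := sum_maxInterCard_le_of_EF1 hprivate hA hEF
    rw [hcommon, max_self] at hwelfare
    exact_mod_cast hwelfare
end
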